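/- The function a: ℝ⁸ → ℂ defined below is a Schwartz function and is a +1-eigenfunction of the Fourier transform: â(x) = a(x) for all x ∈ ℝ⁸. -/

import Mathlib

open MeasureTheory FourierTransform

/-- Weight 2 Eisenstein series (quasimodular), via its `q`-expansion. -/
noncomputable def E2 (z : ℂ) : ℂ :=
  1 - 24 * ∑' n : ℕ+, ((ArithmeticFunction.sigma 1 n : ℕ) : ℂ) *
    Complex.exp (2 * (Real.pi : ℂ) * Complex.I * n * z)

/-- Weight 4 Eisenstein series, via its `q`-expansion. -/
noncomputable def E4 (z : ℂ) : ℂ :=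
  1 + 240 * ∑' n : ℕ+, ((ArithmeticFunction.sigma 3 n : ℕ) : ℂ) *
    Complex.exp (2 * (Real.pi : ℂ) * Complex.I * n * z)

/-- Weight 6 Eisenstein series, via its `q`-expansion. -/
noncomputable def E6 (z : ℂ) : ℂ :=
  1 - 504 * ∑' n : ℕ+, ((ArithmeticFunction.sigma 5 n : ℕ) : ℂ) *
    Complex.exp (2 * (Real.pi : ℂ) * Complex.I * n * z)

/-- The elliptic `j`-invariant. -/
noncomputable def jInv (z : ℂ) : ℂ := 1728 * E4 z ^ 3 / (E4 z ^ 3 - E6 z ^ 2)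

/-- The weakly holomorphic modular form `varphi_{-2}`. -/
noncomputable def varphim2 (z : ℂ) : ℂ := -1728 * E4 z * E6 z / (E4 z ^ 3 - E6 z ^ 2)

/-- The weakly holomorphic modular form `varphi_{-4}`. -/
noncomputable def varphim4 (z : ℂ) : ℂ := 1728 * E4 z ^ 2 / (E4 z ^ 3 - E6 z ^ 2)

/-- `φ_{-4} = varphi_{-4}`. -/
noncomputable def phim4 (z : ℂ) : ℂ := varphim4 z

/-- `φ_{-2} = varphi_{-4}·E2 + varphi_{-2}`. -/
noncomputable def phim2 (z : ℂ) : ℂ := varphim4 z * E2 z + varphim2 z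

/-- `φ_0 = varphi_{-4}·E2² + 2·varphi_{-2}·E2 + j − 1728`. -/
noncomputable def phi0 (z : ℂ) : ℂ :=
  varphim4 z * E2 z ^ 2 + 2 * varphim2 z * E2 z + jInv z - 1728
/-- Contour integral of `F` along the straight-line segment from `z₁` to `z₂`. -/
noncomputable def segInt (z₁ z₂ : ℂ) (F : ℂ → ℂ) : ℂ :=
  (z₂ - z₁) * ∫ t in (0:ℝ)..1, F (z₁ + (t : ℂ) * (z₂ - z₁))

/-- Contour integral of `F` along the vertical ray from `c·i` to `i∞`. -/
noncomputable def rayIntFrom (c : ℝ) (F : ℂ → ℂ) : ℂ :=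
  Complex.I * ∫ t in Set.Ioi c, F (Complex.I * (t : ℂ))
/-- The radial profile of the `+1`-eigenfunction `a`: the value of `a` on vectors of norm `r`. -/
noncomputable def aRad (r : ℝ) : ℂ :=
  segInt (-1) Complex.I
      (fun z => phi0 (-1/(z+1)) * (z+1)^2 * Complex.exp ((Real.pi:ℂ) * Complex.I * (r:ℂ)^2 * z))
    + segInt 1 Complex.I
      (fun z => phi0 (-1/(z-1)) * (z-1)^2 * Complex.exp ((Real.pi:ℂ) * Complex.I * (r:ℂ)^2 * z))
    - 2 * segInt 0 Complex.I
      (fun z => phi0 (-1/z) * z^2 * Complex.exp ((Real.pi:ℂ) * Complex.I * (r:ℂ)^2 * z))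
    + 2 * rayIntFrom 1 (fun z => phi0 z * Complex.exp ((Real.pi:ℂ) * Complex.I * (r:ℂ)^2 * z))

/-- The radial function `a : ℝ⁸ → ℂ`. -/
noncomputable def aFn (x : EuclideanSpace ℝ (Fin 8)) : ℂ := aRad ‖x‖

/-!
The substitution `u = -1/(z - c)` turns the integral over the segment from a cusp `c` to `i` into
a superposition `∫ h(s) e^{πi‖x‖²z(s)} ds` of Gaussians; the integral over the vertical ray already
is one. Since `φ₀ = 1728 (E₂E₄ - E₆)² / (E₄³ - E₆²)` is `1`-periodic and vanishes at `i∞`, it is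
`O(e^{-2π im z})` there. Hence the moments of `h` against all powers of `|z|` and `1 / im z` are
finite, and superpositions with this property are Schwartz functions.

In dimension `8` the Fourier transform replaces `e^{πi‖x‖²z}` by `z⁻⁴ e^{πi‖x‖²(-1/z)}`. As
`z ↦ -1/z` carries the segment from `0` to `i` to the ray from `i` to `i∞`, the third and fourth
summands are interchanged. The segment from `-1` to `i` goes to an arc from `1` to `i`, and the
periodicity of `φ₀` together with Cauchy's theorem identifies the resulting integral with the one
over the segment from `1` to `i`, so the first two summands are interchanged as well.
-/

open Complex Filter Topology
open scoped Real SchwartzMap ContDiff InnerProductSpace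

theorem exists_pow_norm_mul_norm_iteratedFDeriv_smul_le {E F : Type*} [NormedAddCommGroup E]
    [NormedSpace ℝ E] [NormedAddCommGroup F] [NormedSpace ℝ F] [NormedSpace ℂ F]
    [IsScalarTower ℝ ℂ F] {f : E → ℂ} {g : E → F} {n : ℕ} (hf : ContDiff ℝ ∞ f)
    (hdecay : ∀ i ≤ n, ∀ k : ℕ, ∃ C, ∀ x, ‖x‖ ^ k * ‖iteratedFDeriv ℝ i f x‖ ≤ C)
    (hg : g.HasTemperateGrowth) (k : ℕ) :
    ∃ C, ∀ x, ‖x‖ ^ k * ‖iteratedFDeriv ℝ n (fun y => f y • g y) x‖ ≤ C := by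
  obtain ⟨m, B, hB, hgB⟩ := hg.norm_iteratedFDeriv_le_uniform n
  choose! C hC using hdecay
  refine ⟨∑ i ∈ Finset.range (n + 1), n.choose i * (2 ^ m * B * (C i k + C i (k + m))),
    fun x => ?_⟩
  have hpow : (1 + ‖x‖) ^ m ≤ 2 ^ m * (1 + ‖x‖ ^ m) := by
    calc (1 + ‖x‖) ^ m ≤ 2 ^ (m - 1) * (1 ^ m + ‖x‖ ^ m) :=
        add_pow_le zero_le_one (norm_nonneg x) m
      _ ≤ 2 ^ m * (1 + ‖x‖ ^ m) := by
        rw [one_pow]; gcongr <;> [norm_num; omega]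
  calc _ ≤ ‖x‖ ^ k * ∑ i ∈ Finset.range (n + 1),
        (n.choose i : ℝ) * ‖iteratedFDeriv ℝ i f x‖ * ‖iteratedFDeriv ℝ (n - i) g x‖ := by
        gcongr
        exact norm_iteratedFDeriv_smul_le hf hg.1 x (mod_cast le_top)
    _ ≤ _ := by
        rw [Finset.mul_sum]
        refine Finset.sum_le_sum fun i hi => ?_
        have hi' : i ≤ n := Finset.mem_range_succ_iff.mp hi
        calc _ ≤ ‖x‖ ^ k * (n.choose i * ‖iteratedFDeriv ℝ i f x‖ *
              (B * (2 ^ m * (1 + ‖x‖ ^ m)))) := by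
              gcongr; exact (hgB _ (Nat.sub_le n i) x).trans (by gcongr)
          _ = n.choose i * (2 ^ m * B * (‖x‖ ^ k * ‖iteratedFDeriv ℝ i f x‖ +
              ‖x‖ ^ (k + m) * ‖iteratedFDeriv ℝ i f x‖)) := by ring
          _ ≤ _ := by gcongr <;> exact hC i hi' _ x

theorem rpow_half_natCast_le {r : ℝ} (hr : 0 < r) (n : ℕ) :
    r ^ (n / 2 : ℝ) ≤ 1 + r ^ n := by
  have hsq : r ^ n = (r ^ (n / 2 : ℝ)) ^ 2 := by
    rw [← Real.rpow_mul_natCast hr.le, ← Real.rpow_natCast r n]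
    congr 1
    push_cast
    ring
  rw [hsq]
  nlinarith [sq_nonneg (r ^ (n / 2 : ℝ) - 1), sq_nonneg (r ^ (n / 2 : ℝ))]

section Gaussian

variable {α : Type*} [MeasurableSpace α] {μ : Measure α} {h z : α → ℂ}
variable {V : Type*} [NormedAddCommGroup V]

/-- The superposition `x ↦ ∫ h(t) e^{πi‖x‖² z(t)} dμ(t)` of the Gaussians with parameters `z(t)`
in the upper half-plane and weights `h(t)`. -/
noncomputable def gaussianSuperposition (μ : Measure α) (h z : α → ℂ) (x : V) : ℂ :=
  ∫ t, h t * cexp (π * I * (‖x‖ : ℂ) ^ 2 * z t) ∂μ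

/-- The moment condition making `gaussianSuperposition μ h z` a Schwartz function. Moments in
`(im z)⁻¹` control the decay at infinity and moments in `‖z‖` control the derivatives. -/
structure HasGaussianMoments (μ : Measure α) (h z : α → ℂ) : Prop where
  aestronglyMeasurable_weight : AEStronglyMeasurable h μ
  aestronglyMeasurable_param : AEStronglyMeasurable z μ
  im_pos : ∀ᵐ t ∂μ, 0 < (z t).im
  integrable : ∀ n k : ℕ, Integrable (fun t => ‖h t‖ * ‖z t‖ ^ n * (z t).im⁻¹ ^ k) μ

theorem norm_cexp_pi_mul_I_mul_sq_mul (r : ℝ) (w : ℂ) :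
    ‖cexp (π * I * (r : ℂ) ^ 2 * w)‖ = Real.exp (-(π * r ^ 2 * w.im)) := by
  rw [norm_exp]
  congr 1
  simp [← ofReal_pow]

theorem norm_cexp_pi_mul_I_mul_sq_mul_le_one {w : ℂ} (hw : 0 < w.im) (r : ℝ) :
    ‖cexp (π * I * (r : ℂ) ^ 2 * w)‖ ≤ 1 := by
  rw [norm_cexp_pi_mul_I_mul_sq_mul]
  exact Real.exp_le_one_iff.mpr (neg_nonpos.mpr (mul_nonneg (by positivity) hw.le))

theorem aestronglyMeasurable_mul_cexp (hh : AEStronglyMeasurable h μ)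
    (hz : AEStronglyMeasurable z μ) (x : V) :
    AEStronglyMeasurable (fun t => h t * cexp (π * I * (‖x‖ : ℂ) ^ 2 * z t)) μ :=
  hh.mul (continuous_exp.comp_aestronglyMeasurable (hz.const_mul _))

theorem pow_mul_exp_neg_le {b : ℝ} (hb : 0 < b) (r : ℝ) (k : ℕ) :
    r ^ k * Real.exp (-(π * r ^ 2 * b)) ≤ 1 + k.factorial * b⁻¹ ^ k := by
  have hexp : Real.exp (-(π * r ^ 2 * b)) ≤ 1 :=
    Real.exp_le_one_iff.mpr (neg_nonpos.mpr (mul_nonneg (by positivity) hb.le))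
  have hpow : r ^ k ≤ 1 + (r ^ 2) ^ k := by
    rw [← pow_mul, mul_comm 2 k, pow_mul]
    nlinarith [sq_nonneg (r ^ k - 1), sq_nonneg (r ^ k)]
  have hfact : (r ^ 2 * b) ^ k ≤ k.factorial * Real.exp (π * r ^ 2 * b) := by
    have hterm := Real.pow_div_factorial_le_exp (r ^ 2 * b) (by positivity) k
    rw [div_le_iff₀' (by positivity)] at hterm
    refine hterm.trans ?_
    gcongr
    nlinarith [Real.pi_gt_three, mul_nonneg (sq_nonneg r) hb.le]
  calc r ^ k * Real.exp (-(π * r ^ 2 * b))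
      ≤ (1 + (r ^ 2) ^ k) * Real.exp (-(π * r ^ 2 * b)) := by gcongr
    _ = Real.exp (-(π * r ^ 2 * b)) +
          (r ^ 2 * b) ^ k * Real.exp (-(π * r ^ 2 * b)) * b⁻¹ ^ k := by
        rw [mul_pow, inv_pow]; field_simp
    _ ≤ 1 + k.factorial * Real.exp (π * r ^ 2 * b) * Real.exp (-(π * r ^ 2 * b)) * b⁻¹ ^ k := by
        gcongr
    _ = 1 + k.factorial * b⁻¹ ^ k := by
        rw [mul_assoc (k.factorial : ℝ), ← Real.exp_add, add_neg_cancel, Real.exp_zero, mul_one]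

namespace HasGaussianMoments

theorem integrable_norm_weight (H : HasGaussianMoments μ h z) : Integrable (fun t => ‖h t‖) μ := by
  simpa using H.integrable 0 0

theorem integrable_mul_cexp (H : HasGaussianMoments μ h z) (x : V) :
    Integrable (fun t => h t * cexp (π * I * (‖x‖ : ℂ) ^ 2 * z t)) μ := by
  refine H.integrable_norm_weight.mono' (aestronglyMeasurable_mul_cexp
    H.aestronglyMeasurable_weight H.aestronglyMeasurable_param x) ?_
  filter_upwards [H.im_pos] with t ht
  rw [norm_mul]
  exact mul_le_of_le_one_right (norm_nonneg _) (norm_cexp_pi_mul_I_mul_sq_mul_le_one ht _)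

theorem const_mul_param_mul (H : HasGaussianMoments μ h z) (c : ℂ) :
    HasGaussianMoments μ (fun t => c * z t * h t) z where
  aestronglyMeasurable_weight :=
    (H.aestronglyMeasurable_param.const_mul c).mul H.aestronglyMeasurable_weight
  aestronglyMeasurable_param := H.aestronglyMeasurable_param
  im_pos := H.im_pos
  integrable n k := by
    refine ((H.integrable (n + 1) k).const_mul ‖c‖).congr (.of_forall fun t => ?_)
    simp only [norm_mul]
    ring

theorem pow_norm_mul_norm_gaussianSuperposition_le (H : HasGaussianMoments μ h z) (k : ℕ) :
    ∃ C, ∀ x : V, ‖x‖ ^ k * ‖gaussianSuperposition μ h z x‖ ≤ C := by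
  refine ⟨∫ t, (‖h t‖ + k.factorial * (‖h t‖ * ‖z t‖ ^ 0 * (z t).im⁻¹ ^ k)) ∂μ, fun x => ?_⟩
  rw [← norm_norm x, ← norm_pow, ← norm_smul, gaussianSuperposition, ← integral_smul]
  refine norm_integral_le_of_norm_le
    (H.integrable_norm_weight.add ((H.integrable 0 k).const_mul _)) ?_
  filter_upwards [H.im_pos] with t ht
  calc _ = ‖h t‖ * (‖x‖ ^ k * Real.exp (-(π * ‖x‖ ^ 2 * (z t).im))) := by
        rw [norm_smul, norm_mul, norm_cexp_pi_mul_I_mul_sq_mul, norm_pow, norm_norm]; ring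
    _ ≤ ‖h t‖ * (1 + k.factorial * (z t).im⁻¹ ^ k) := by
        gcongr; exact pow_mul_exp_neg_le ht ‖x‖ k
    _ = _ := by ring

variable [InnerProductSpace ℝ V]

theorem hasFDerivAt_cexp_pi_mul_I_mul_norm_sq_mul (w : ℂ) (x : V) :
    HasFDerivAt (fun y : V => cexp (π * I * (‖y‖ : ℂ) ^ 2 * w))
      ((2 * π * I * w * cexp (π * I * (‖x‖ : ℂ) ^ 2 * w)) • (ofRealCLM ∘L innerSL ℝ x)) x := by
  have hsq : HasFDerivAt (fun y : V => ((‖y‖ ^ 2 : ℝ) : ℂ))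
      (ofRealCLM ∘L ((2 : ℝ) • innerSL ℝ x)) x :=
    ofRealCLM.hasFDerivAt.comp x <| (hasStrictFDerivAt_norm_sq x).hasFDerivAt.congr_fderiv <| by
      rw [two_smul, two_smul]
  have hmul := ((hsq.const_mul (π * I)).mul_const w).cexp
  push_cast at hmul
  refine hmul.congr_fderiv (ContinuousLinearMap.ext fun v => ?_)
  simp [smul_eq_mul]
  ring

theorem hasFDerivAt_gaussianSuperposition (H : HasGaussianMoments μ h z) (x : V) :
    HasFDerivAt (gaussianSuperposition μ h z : V → ℂ)
      (gaussianSuperposition μ (fun t => 2 * π * I * z t * h t) z x •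
        (ofRealCLM ∘L innerSL ℝ x)) x := by
  have H' := H.const_mul_param_mul (2 * π * I)
  have hint := integral_smul_const (μ := μ) (fun t => 2 * π * I * z t * h t *
    cexp (π * I * (‖x‖ : ℂ) ^ 2 * z t)) (ofRealCLM ∘L innerSL ℝ x : V →L[ℝ] ℂ)
  rw [gaussianSuperposition, ← hint]
  refine hasFDerivAt_integral_of_dominated_of_fderiv_le (F := fun (y : V) t =>
      h t * cexp (π * I * (‖y‖ : ℂ) ^ 2 * z t))
    (F' := fun (y : V) t => ((2 * π * I * z t * h t) *
      cexp (π * I * (‖y‖ : ℂ) ^ 2 * z t)) • (ofRealCLM ∘L innerSL ℝ y))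
    (bound := fun t => ‖2 * π * I * z t * h t‖ * (‖x‖ + 1))
    (Metric.ball_mem_nhds x one_pos)
    (.of_forall fun y => aestronglyMeasurable_mul_cexp H.aestronglyMeasurable_weight
      H.aestronglyMeasurable_param y) (H.integrable_mul_cexp x)
    ((H'.integrable_mul_cexp x).aestronglyMeasurable.smul_const _) ?_
    (H'.integrable_norm_weight.mul_const _) (.of_forall fun t y _ => ?_)
  · filter_upwards [H.im_pos] with t ht y hy
    have hy' : ‖y‖ ≤ ‖x‖ + 1 := by
      linarith [norm_le_norm_add_norm_sub' y x, mem_ball_iff_norm.mp hy]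
    have hL : ‖(ofRealCLM ∘L innerSL ℝ y : V →L[ℝ] ℂ)‖ ≤ ‖x‖ + 1 :=
      (ContinuousLinearMap.opNorm_comp_le _ _).trans (by simpa using hy')
    rw [norm_smul, norm_mul]
    exact mul_le_mul (mul_le_of_le_one_right (norm_nonneg _)
      (norm_cexp_pi_mul_I_mul_sq_mul_le_one ht _)) hL (norm_nonneg _) (norm_nonneg _)
  · refine ((hasFDerivAt_cexp_pi_mul_I_mul_norm_sq_mul (z t) y).const_mul (h t)).congr_fderiv ?_
    rw [smul_smul]
    congr 1
    ring

theorem fderiv_gaussianSuperposition (H : HasGaussianMoments μ h z) :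
    fderiv ℝ (gaussianSuperposition μ h z : V → ℂ) =
      fun x => gaussianSuperposition μ (fun t => 2 * π * I * z t * h t) z x •
        (ofRealCLM.postcomp V ∘L innerSL ℝ) x :=
  funext fun x => (hasFDerivAt_gaussianSuperposition H x).fderiv

theorem contDiff_gaussianSuperposition (H : HasGaussianMoments μ h z) :
    ContDiff ℝ ∞ (gaussianSuperposition μ h z : V → ℂ) := by
  refine contDiff_infty.mpr fun n => ?_
  induction n generalizing h with
  | zero =>
    exact contDiff_zero.mpr <| continuous_iff_continuousAt.mpr fun x =>
      (hasFDerivAt_gaussianSuperposition H x).continuousAt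
  | succ n ih =>
    have hsmul := (ih (H.const_mul_param_mul (2 * π * I))).smul
      (ofRealCLM.postcomp V ∘L innerSL ℝ (E := V)).contDiff
    exact contDiff_succ_iff_hasFDerivAt.mpr ⟨_, hsmul, hasFDerivAt_gaussianSuperposition H⟩

theorem decay_gaussianSuperposition (H : HasGaussianMoments μ h z) (k n : ℕ) :
    ∃ C, ∀ x : V, ‖x‖ ^ k * ‖iteratedFDeriv ℝ n (gaussianSuperposition μ h z) x‖ ≤ C := by
  induction n using Nat.strong_induction_on generalizing h k with
  | _ n ih =>
    cases n with
    | zero => simpa using H.pow_norm_mul_norm_gaussianSuperposition_le k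
    | succ n =>
      have H' := H.const_mul_param_mul (2 * π * I)
      simp_rw [← norm_iteratedFDeriv_fderiv, fderiv_gaussianSuperposition H]
      exact exists_pow_norm_mul_norm_iteratedFDeriv_smul_le
        (contDiff_gaussianSuperposition H') (fun i hi k => ih i (by omega) H' k)
        (ContinuousLinearMap.hasTemperateGrowth _) k

/-- The Gaussian superposition `gaussianSuperposition μ h z` as a Schwartz function. -/
noncomputable def toSchwartz (V : Type*) [NormedAddCommGroup V] [InnerProductSpace ℝ V]
    (H : HasGaussianMoments μ h z) : 𝓢(V, ℂ) where
  toFun := gaussianSuperposition μ h z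
  smooth' := contDiff_gaussianSuperposition H
  decay' := decay_gaussianSuperposition H

theorem coe_toSchwartz (H : HasGaussianMoments μ h z) :
    ⇑(H.toSchwartz V) = gaussianSuperposition μ h z := rfl

theorem toSchwartz_neg (H : HasGaussianMoments μ h z) (x : V) :
    H.toSchwartz V (-x) = H.toSchwartz V x := by
  simp only [H.coe_toSchwartz, gaussianSuperposition, norm_neg]

variable [FiniteDimensional ℝ V] [MeasurableSpace V] [BorelSpace V]

theorem re_neg_pi_mul_I_mul_pos {w : ℂ} (hw : 0 < w.im) : 0 < (-(π * I * w)).re := by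
  simpa using mul_pos Real.pi_pos hw

theorem fourier_cexp_pi_mul_I_mul_norm_sq_mul {w : ℂ} (hw : 0 < w.im) (y : V) :
    𝓕 (fun x : V => cexp (π * I * (‖x‖ : ℂ) ^ 2 * w)) y =
      (I / w) ^ (Module.finrank ℝ V / 2 : ℂ) * cexp (π * I * (‖y‖ : ℂ) ^ 2 * (-1 / w)) := by
  have hw0 : w ≠ 0 := fun h => by simp [h] at hw
  have hrw : ∀ x : V, π * I * (‖x‖ : ℂ) ^ 2 * w = -(-(π * I * w)) * (‖x‖ : ℂ) ^ 2 :=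
    fun x => by ring
  simp_rw [hrw]
  rw [fourier_gaussian_innerProductSpace (re_neg_pi_mul_I_mul_pos hw)]
  have hpi : (π : ℂ) ≠ 0 := ofReal_ne_zero.mpr Real.pi_ne_zero
  congr 2
  · field_simp
    rw [I_sq]
  · field_simp
    rw [I_sq]
    ring

theorem integrable_cexp_pi_mul_I_mul_norm_sq_mul {w : ℂ} (hw : 0 < w.im) :
    Integrable (fun x : V => cexp (π * I * (‖x‖ : ℂ) ^ 2 * w)) := by
  refine (GaussianFourier.integrable_cexp_neg_mul_sq_norm_add
    (re_neg_pi_mul_I_mul_pos hw) 0 (0 : V)).congr (.of_forall fun x => ?_)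
  simp only [zero_mul, add_zero]
  congr 1
  ring

theorem integral_norm_cexp_pi_mul_I_mul_norm_sq_mul {w : ℂ} (hw : 0 < w.im) :
    ∫ x : V, ‖cexp (π * I * (‖x‖ : ℂ) ^ 2 * w)‖ = w.im⁻¹ ^ (Module.finrank ℝ V / 2 : ℝ) := by
  have hrw : ∀ x : V, -(π * ‖x‖ ^ 2 * w.im) = -(π * w.im) * ‖x‖ ^ 2 := fun x => by ring
  simp_rw [norm_cexp_pi_mul_I_mul_sq_mul, hrw]
  rw [GaussianFourier.integral_rexp_neg_mul_sq_norm (by positivity),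
    div_mul_cancel_left₀ Real.pi_ne_zero]

theorem integrable_prod_mul_cexp [SFinite μ] (H : HasGaussianMoments μ h z) :
    Integrable (Function.uncurry fun (x : V) t => h t * cexp (π * I * (‖x‖ : ℂ) ^ 2 * z t))
      (volume.prod μ) := by
  have hmeas : AEStronglyMeasurable
      (Function.uncurry fun (x : V) t => h t * cexp (π * I * (‖x‖ : ℂ) ^ 2 * z t))
      (volume.prod μ) := by
    have hx : AEStronglyMeasurable (fun x : V => π * I * (‖x‖ : ℂ) ^ 2) :=
      Continuous.aestronglyMeasurable (by fun_prop)
    exact H.aestronglyMeasurable_weight.comp_snd.mul <| continuous_exp.comp_aestronglyMeasurable <|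
      hx.comp_fst.mul H.aestronglyMeasurable_param.comp_snd
  have hnorm : (fun t => ∫ x : V, ‖h t * cexp (π * I * (‖x‖ : ℂ) ^ 2 * z t)‖) =ᵐ[μ]
      fun t => ‖h t‖ * (z t).im⁻¹ ^ (Module.finrank ℝ V / 2 : ℝ) := by
    filter_upwards [H.im_pos] with t ht
    simp_rw [norm_mul, integral_const_mul, integral_norm_cexp_pi_mul_I_mul_norm_sq_mul (V := V) ht]
  have hint := H.integrable_norm_weight.add (H.integrable 0 (Module.finrank ℝ V))
  refine (integrable_prod_iff' hmeas).mpr ⟨?_, hint.mono' ?_ ?_⟩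
  · filter_upwards [H.im_pos] with t ht
    exact (integrable_cexp_pi_mul_I_mul_norm_sq_mul (V := V) ht).const_mul (h t)
  · exact hmeas.norm.prod_swap.integral_prod_right'
  · filter_upwards [H.im_pos, hnorm] with t ht hnorm
    simp only [Function.uncurry_apply_pair]
    rw [hnorm, Real.norm_of_nonneg (by positivity)]
    calc _ ≤ ‖h t‖ * (1 + (z t).im⁻¹ ^ Module.finrank ℝ V) := by
          gcongr; exact rpow_half_natCast_le (inv_pos.mpr ht) _
      _ = _ := by simp [mul_add]

theorem fourier_gaussianSuperposition [SFinite μ] (H : HasGaussianMoments μ h z) (y : V) :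
    𝓕 (gaussianSuperposition μ h z : V → ℂ) y =
      gaussianSuperposition μ (fun t => h t * (I / z t) ^ (Module.finrank ℝ V / 2 : ℂ))
        (fun t => -1 / z t) y := by
  have hint : Integrable (Function.uncurry fun (x : V) t =>
      cexp (↑(-2 * π * ⟪x, y⟫_ℝ) * I) • (h t * cexp (π * I * (‖x‖ : ℂ) ^ 2 * z t)))
      (volume.prod μ) :=
    (H.integrable_prod_mul_cexp (V := V)).bdd_mul (c := 1)
      (f := fun p => cexp (↑(-2 * π * ⟪p.1, y⟫_ℝ) * I))
      (AEStronglyMeasurable.comp_fst (f := fun x : V => cexp (↑(-2 * π * ⟪x, y⟫_ℝ) * I))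
        (Continuous.aestronglyMeasurable (by fun_prop)))
      (.of_forall fun p => (norm_exp_ofReal_mul_I _).le)
  simp only [Real.fourier_eq', gaussianSuperposition, ← integral_smul]
  rw [integral_integral_swap hint]
  refine integral_congr_ae ?_
  filter_upwards [H.im_pos] with t ht
  rw [mul_assoc, ← fourier_cexp_pi_mul_I_mul_norm_sq_mul ht, Real.fourier_eq',
    ← integral_const_mul]
  congr with x
  exact (mul_smul_comm _ _ _).symm

end HasGaussianMoments

end Gaussian

section ContourRotation

variable {G : ℂ → ℂ} {a c M : ℝ}

theorem exists_hasDerivAt_of_differentiableOn_im_pos (hG : DifferentiableOn ℂ G {u | 0 < u.im}) :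
    ∃ F : ℂ → ℂ, ∀ u : ℂ, 0 < u.im → HasDerivAt F (G u) u := by
  obtain ⟨F, hF⟩ := (convex_halfSpace_im_gt 0).exists_forall_hasDerivWithinAt hG
  exact ⟨F, fun u hu => (hF u hu).hasDerivAt <|
    (isOpen_lt continuous_const continuous_im).mem_nhds hu⟩

theorem norm_sub_le_of_hasDerivAt_of_norm_le_exp {F : ℂ → ℂ} (ha : 0 ≤ a) (hM : 0 ≤ M)
    (hF : ∀ u : ℂ, c ≤ u.im → HasDerivAt F (G u) u)
    (hbd : ∀ u : ℂ, c ≤ u.im → ‖G u‖ ≤ M * Real.exp (-a * u.im)) {x y : ℂ}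
    (hx : c ≤ x.im) (hy : c ≤ y.im) :
    ‖F y - F x‖ ≤ M * Real.exp (-a * c) * ‖y - x‖ := by
  refine (convex_halfSpace_im_ge c).norm_image_sub_le_of_norm_hasDerivWithin_le
    (fun u hu => (hF u hu).hasDerivWithinAt) (fun u hu => (hbd u hu).trans ?_) hx hy
  gcongr M * Real.exp ?_
  exact mul_le_mul_of_nonpos_left hu (neg_nonpos.mpr ha)

theorem integrableOn_Ioi_mul_ray (ha : 0 < a) (hG : ContinuousOn G {u | c ≤ u.im})
    (hbd : ∀ u : ℂ, c ≤ u.im → ‖G u‖ ≤ M * Real.exp (-a * u.im))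
    {q d : ℂ} {A : ℝ} (hd : 0 < d.im) (hA : c ≤ (q + A * d).im) :
    IntegrableOn (fun s : ℝ => G (q + s * d) * d) (Set.Ioi A) := by
  have hmem : ∀ s ∈ Set.Ioi A, c ≤ (q + s * d).im := fun s hs => hA.trans <| by
    have := mul_le_mul_of_nonneg_right (le_of_lt hs) hd.le
    simpa using this
  have hexp : IntegrableOn (fun s => M * Real.exp (-a * q.im) * ‖d‖ * Real.exp (-(a * d.im) * s))
      (Set.Ioi A) := (exp_neg_integrableOn_Ioi A (mul_pos ha hd)).const_mul _
  have hcont : ContinuousOn (fun s : ℝ => G (q + s * d) * d) (Set.Ioi A) :=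
    (hG.comp (by fun_prop) hmem).mul continuousOn_const
  refine hexp.mono' (hcont.aestronglyMeasurable measurableSet_Ioi) ?_
  filter_upwards [self_mem_ae_restrict measurableSet_Ioi] with s hs
  have hsplit : -a * (q + s * d).im = -a * q.im + -(a * d.im) * s := by
    rw [add_im, im_ofReal_mul]
    ring
  calc ‖G (q + s * d) * d‖ ≤ M * Real.exp (-a * (q + s * d).im) * ‖d‖ := by
        rw [norm_mul]; gcongr; exact hbd _ (hmem s hs)
    _ = M * Real.exp (-a * q.im) * ‖d‖ * Real.exp (-(a * d.im) * s) := by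
        rw [hsplit, Real.exp_add]; ring

theorem tendsto_sub_along_rays {F : ℂ → ℂ} (ha : 0 < a) (hM : 0 ≤ M)
    (hF : ∀ u : ℂ, c ≤ u.im → HasDerivAt F (G u) u)
    (hbd : ∀ u : ℂ, c ≤ u.im → ‖G u‖ ≤ M * Real.exp (-a * u.im))
    {q₁ q₂ d₁ d₂ : ℂ} {A : ℝ} (hd₁ : 0 < d₁.im) (hd₂ : 0 < d₂.im)
    (hmeet : q₁ + A * d₁ = q₂ + A * d₂) (hA : c ≤ (q₁ + A * d₁).im) :
    Tendsto (fun s : ℝ => F (q₁ + s * d₁) - F (q₂ + s * d₂)) atTop (𝓝 0) := by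
  set m := min d₁.im d₂.im
  have hm : 0 < m := lt_min hd₁ hd₂
  have hbound : ∀ s, A ≤ s → ‖F (q₁ + s * d₁) - F (q₂ + s * d₂)‖ ≤
      M * Real.exp (-a * c) * ‖d₁ - d₂‖ * ((s - A) * Real.exp (-(a * m) * (s - A))) := by
    intro s hs
    have hs' : 0 ≤ s - A := sub_nonneg.mpr hs
    have him₁ : c + (s - A) * m ≤ (q₁ + s * d₁).im := by
      have := mul_le_mul_of_nonneg_left (min_le_left d₁.im d₂.im) hs'
      simp only [add_im, im_ofReal_mul] at hA ⊢
      linarith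
    have him₂ : c + (s - A) * m ≤ (q₂ + s * d₂).im := by
      have := mul_le_mul_of_nonneg_left (min_le_right d₁.im d₂.im) hs'
      rw [hmeet] at hA
      simp only [add_im, im_ofReal_mul] at hA ⊢
      linarith
    have hle : c ≤ c + (s - A) * m := by linarith [mul_nonneg hs' hm.le]
    have hdist : (q₁ + s * d₁) - (q₂ + s * d₂) = (s - A : ℝ) * (d₁ - d₂) := by
      push_cast
      linear_combination hmeet
    calc _ ≤ M * Real.exp (-a * (c + (s - A) * m)) * ‖(q₁ + s * d₁) - (q₂ + s * d₂)‖ :=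
          norm_sub_le_of_hasDerivAt_of_norm_le_exp ha.le hM (fun u hu => hF u (hle.trans hu))
            (fun u hu => hbd u (hle.trans hu)) him₂ him₁
      _ = _ := by
          rw [hdist, norm_mul, norm_real, Real.norm_of_nonneg hs', mul_add, Real.exp_add]
          ring_nf
  refine squeeze_zero_norm' (eventually_atTop.mpr ⟨A, hbound⟩) ?_
  have hlim := (tendsto_rpow_mul_exp_neg_mul_atTop_nhds_zero 1 _ (mul_pos ha hm)).comp
    (tendsto_atTop_add_const_right atTop (-A) tendsto_id)
  simpa [sub_eq_add_neg] using hlim.const_mul (M * Real.exp (-a * c) * ‖d₁ - d₂‖)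

theorem integral_Ioi_ray_eq_integral_Ioi_ray (ha : 0 < a) (hc : 0 < c)
    (hG : DifferentiableOn ℂ G {u | 0 < u.im})
    (hbd : ∀ u : ℂ, c ≤ u.im → ‖G u‖ ≤ M * Real.exp (-a * u.im))
    {q₁ q₂ d₁ d₂ : ℂ} {A : ℝ} (hd₁ : 0 < d₁.im) (hd₂ : 0 < d₂.im)
    (hmeet : q₁ + A * d₁ = q₂ + A * d₂) (hA : c ≤ (q₁ + A * d₁).im) :
    ∫ s in Set.Ioi A, G (q₁ + s * d₁) * d₁ = ∫ s in Set.Ioi A, G (q₂ + s * d₂) * d₂ := by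
  obtain ⟨F, hF⟩ := exists_hasDerivAt_of_differentiableOn_im_pos hG
  have hM : 0 ≤ M := nonneg_of_mul_nonneg_left
    ((norm_nonneg _).trans (hbd _ hA)) (Real.exp_pos _)
  have hGc : ContinuousOn G {u | c ≤ u.im} :=
    hG.continuousOn.mono fun u (hu : c ≤ u.im) => hc.trans_le hu
  have hderiv : ∀ {q d : ℂ}, 0 < d.im → c ≤ (q + A * d).im → ∀ s ∈ Set.Ici A,
      HasDerivAt (fun s : ℝ => F (q + s * d)) (G (q + s * d) * d) s := by
    intro q d hd hA s hs
    have him : 0 < (q + s * d).im := by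
      have := mul_le_mul_of_nonneg_right hs hd.le
      simp only [add_im, im_ofReal_mul] at hA ⊢
      linarith
    have hray : HasDerivAt (fun w : ℂ => q + w * d) d s := by
      simpa using ((hasDerivAt_id (s : ℂ)).mul_const d).const_add q
    exact ((hF _ him).comp (s : ℂ) hray).comp_ofReal
  have hint₁ := integrableOn_Ioi_mul_ray ha hGc hbd hd₁ hA
  have hint₂ := integrableOn_Ioi_mul_ray ha hGc hbd hd₂ (hmeet ▸ hA)
  rw [← sub_eq_zero, ← integral_sub hint₁ hint₂, integral_Ioi_of_hasDerivAt_of_tendsto'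
    (fun s hs => (hderiv hd₁ hA s hs).sub (hderiv hd₂ (hmeet ▸ hA) s hs)) (hint₁.sub hint₂)
    (tendsto_sub_along_rays ha hM (fun u hu => hF u (hc.trans_le hu)) hbd hd₁ hd₂ hmeet hA)]
  simp [hmeet]

end ContourRotation

section Cusp

/-- A holomorphic function on the upper half-plane with period `1` that tends to `0` at the
cusp `i∞`. Holomorphic functions on `ℍ` are encoded as functions on `ℂ` with arbitrary values
off the upper half-plane. -/
structure VanishesAtCusp (φ : ℂ → ℂ) : Prop where
  differentiableOn : DifferentiableOn ℂ φ {z | 0 < z.im}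
  periodic : Function.Periodic φ 1
  tendsto : Tendsto φ (comap im atTop) (𝓝 0)

open Function (Periodic)

namespace VanishesAtCusp

variable {φ : ℂ → ℂ}

theorem periodic_ofReal_one (hφ : VanishesAtCusp φ) : Periodic φ (1 : ℝ) := by
  simpa using hφ.periodic

theorem differentiableAt (hφ : VanishesAtCusp φ) {z : ℂ} (hz : 0 < z.im) :
    DifferentiableAt ℂ φ z :=
  hφ.differentiableOn.differentiableAt ((isOpen_lt continuous_const continuous_im).mem_nhds hz)

theorem differentiableAt_cuspFunction (hφ : VanishesAtCusp φ) {q : ℂ} (hq : ‖q‖ < 1) :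
    DifferentiableAt ℂ (Periodic.cuspFunction 1 φ) q := by
  rcases eq_or_ne q 0 with rfl | hq0
  · exact hφ.periodic_ofReal_one.differentiableAt_cuspFunction_zero one_pos
      ((tendsto_comap.eventually_gt_atTop 0).mono fun z hz => hφ.differentiableAt hz)
      (ZeroAtFilter.boundedAtFilter hφ.tendsto)
  · rw [← Periodic.qParam_right_inv one_ne_zero hq0]
    exact hφ.periodic_ofReal_one.differentiableAt_cuspFunction one_ne_zero
      (hφ.differentiableAt (Periodic.im_invQParam_pos_of_norm_lt_one one_pos hq hq0))

theorem exists_norm_le_mul_exp (hφ : VanishesAtCusp φ) {c : ℝ} (hc : 0 < c) :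
    ∃ C, ∀ z : ℂ, c ≤ z.im → ‖φ z‖ ≤ C * Real.exp (-2 * π * z.im) := by
  set g := Periodic.cuspFunction 1 φ
  set B := Metric.closedBall (0 : ℂ) (Real.exp (-2 * π * c))
  have hB : ∀ q ∈ B, DifferentiableAt ℂ g q := fun q hq =>
    hφ.differentiableAt_cuspFunction <| (mem_closedBall_zero_iff.mp hq).trans_lt <|
      Real.exp_lt_one_iff.mpr (by nlinarith [Real.pi_pos])
  have hgφ : ∀ z, g (Periodic.qParam 1 z) = φ z :=
    Periodic.eq_cuspFunction one_ne_zero hφ.periodic_ofReal_one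
  have hg0 : g 0 = 0 := Periodic.cuspFunction_zero_of_zero_at_inf one_pos hφ.tendsto
  have hdslope : ContinuousOn (dslope g 0) B :=
    (continuousOn_dslope (Metric.closedBall_mem_nhds 0 (Real.exp_pos _))).mpr
      ⟨fun q hq => (hB q hq).continuousAt.continuousWithinAt,
        hB 0 (Metric.mem_closedBall_self (Real.exp_pos _).le)⟩
  obtain ⟨C, hC⟩ := (isCompact_closedBall 0 _).exists_bound_of_continuousOn hdslope
  refine ⟨C, fun z hz => ?_⟩
  set q := Periodic.qParam 1 z
  have hq : ‖q‖ = Real.exp (-2 * π * z.im) := by rw [Periodic.norm_qParam, div_one]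
  have hqB : q ∈ B := by
    rw [mem_closedBall_zero_iff, hq, Real.exp_le_exp]
    nlinarith [Real.pi_pos]
  calc ‖φ z‖ = ‖(q - 0) • dslope g 0 q‖ := by
        rw [sub_smul_dslope, hg0, sub_zero, hgφ]
    _ = ‖dslope g 0 q‖ * Real.exp (-2 * π * z.im) := by rw [norm_smul, sub_zero, hq, mul_comm]
    _ ≤ C * Real.exp (-2 * π * z.im) := by gcongr; exact hC q hqB

theorem isBigO_exp (hφ : VanishesAtCusp φ) :
    φ =O[comap im atTop] fun z => Real.exp (-2 * π * z.im) := by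
  obtain ⟨C, hC⟩ := hφ.exists_norm_le_mul_exp one_pos
  refine .of_bound C ((tendsto_comap.eventually_ge_atTop 1).mono fun z hz => ?_)
  rw [Real.norm_eq_abs, Real.abs_exp]
  exact hC z hz

end VanishesAtCusp

open scoped UpperHalfPlane ArithmeticFunction.sigma

/-- The Lambert series `∑ σₖ(n) e^{2πinz}`, the common shape of the non-constant parts of the
Eisenstein series `E2`, `E4`, `E6`. -/
noncomputable def sigmaSeries (k : ℕ) (z : ℂ) : ℂ :=
  ∑' n : ℕ+, (σ k n : ℂ) * cexp (2 * π * I * n * z)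

theorem sigmaSeries_eq_tsum_pow (k : ℕ) (z : ℂ) :
    sigmaSeries k z = ∑' n : ℕ+, (σ k n : ℂ) * cexp (2 * π * I * z) ^ (n : ℕ) := by
  refine tsum_congr fun n => ?_
  rw [← exp_nat_mul]
  ring_nf

theorem periodic_sigmaSeries (k : ℕ) : Periodic (sigmaSeries k) 1 := fun z => by
  have hexp : cexp (2 * π * I * (z + 1)) = cexp (2 * π * I * z) := by
    rw [mul_add, mul_one, exp_periodic]
  rw [sigmaSeries_eq_tsum_pow, sigmaSeries_eq_tsum_pow, hexp]

theorem tendsto_sigmaSeries_cusp (k : ℕ) :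
    Tendsto (sigmaSeries k) (comap im atTop) (𝓝 0) := by
  have hsum : Summable fun n : ℕ+ => ‖(σ k n : ℂ) * cexp (2 * π * I * I) ^ (n : ℕ)‖ :=
    (EisensteinSeries.summable_sigma_mul_cexp_pow (k := k + 1) (Nat.le_add_left 1 k)
      UpperHalfPlane.I).norm.comp_injective PNat.coe_injective
  have hq : Tendsto (fun z : ℂ => cexp (2 * π * I * z)) (comap im atTop) (𝓝 0) := by
    refine (tendsto_nhds_of_tendsto_nhdsWithin (Periodic.qParam_tendsto one_pos)).congr fun z => ?_
    rw [Periodic.qParam, ofReal_one, div_one]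
  have hlim : Tendsto (fun z => ∑' n : ℕ+, (σ k n : ℂ) * cexp (2 * π * I * z) ^ (n : ℕ))
      (comap im atTop) (𝓝 (∑' _ : ℕ+, 0)) := by
    refine tendsto_tsum_of_dominated_convergence hsum (fun n => ?_) ?_
    · simpa [n.ne_zero] using (hq.pow n).const_mul (σ k n : ℂ)
    · filter_upwards [tendsto_comap.eventually_ge_atTop 1] with z hz n
      have hle : ‖cexp (2 * π * I * z)‖ ≤ ‖cexp (2 * π * I * I)‖ := by
        simp only [norm_exp, Real.exp_le_exp]
        simpa [mul_assoc] using mul_le_mul_of_nonneg_left hz Real.two_pi_pos.le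
      rw [norm_mul, norm_mul, norm_pow, norm_pow]
      gcongr
  simpa only [tsum_zero, ← sigmaSeries_eq_tsum_pow] using hlim

theorem E2_eq_sigmaSeries (z : ℂ) : E2 z = 1 - 24 * sigmaSeries 1 z := rfl

theorem E4_eq_sigmaSeries (z : ℂ) : E4 z = 1 + 240 * sigmaSeries 3 z := rfl

theorem E6_eq_sigmaSeries (z : ℂ) : E6 z = 1 - 504 * sigmaSeries 5 z := rfl

theorem E2_coe (z : ℍ) : E2 z = EisensteinSeries.E2 z := by
  rw [EisensteinSeries.E2_eq_tsum_cexp, E2_eq_sigmaSeries, sigmaSeries_eq_tsum_pow]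

theorem E4_coe (z : ℍ) : E4 z = ModularForm.E₄ z := by
  have hbernoulli : bernoulli 4 = -1 / 30 := by decide +kernel
  have hq := EisensteinSeries.q_expansion_bernoulli (k := 4) (by norm_num) (by decide) z
  rw [ModularForm.E₄, hq, E4_eq_sigmaSeries, sigmaSeries_eq_tsum_pow, hbernoulli]
  push_cast
  simp only [zpow_natCast]
  ring

theorem E6_coe (z : ℍ) : E6 z = ModularForm.E₆ z := by
  have hbernoulli : bernoulli 6 = 1 / 42 := by decide +kernel
  have hq := EisensteinSeries.q_expansion_bernoulli (k := 6) (by norm_num) (by decide) z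
  rw [ModularForm.E₆, hq, E6_eq_sigmaSeries, sigmaSeries_eq_tsum_pow, hbernoulli]
  push_cast
  simp only [zpow_natCast]
  ring

theorem differentiableOn_of_mdifferentiable_coe {f : ℂ → ℂ} {g : ℍ → ℂ}
    (hg : MDifferentiable (modelWithCornersSelf ℂ ℂ) (modelWithCornersSelf ℂ ℂ) g)
    (hfg : ∀ z : ℍ, f z = g z) : DifferentiableOn ℂ f {z | 0 < z.im} := by
  refine (UpperHalfPlane.mdifferentiable_iff.mp hg).congr fun z hz => ?_
  rw [Function.comp_apply, UpperHalfPlane.ofComplex_apply_of_im_pos hz, ← hfg]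

theorem differentiableOn_E2 : DifferentiableOn ℂ E2 {z | 0 < z.im} :=
  differentiableOn_of_mdifferentiable_coe E2_mdifferentiable E2_coe

theorem differentiableOn_E4 : DifferentiableOn ℂ E4 {z | 0 < z.im} :=
  differentiableOn_of_mdifferentiable_coe ModularForm.E₄.holo' E4_coe

theorem differentiableOn_E6 : DifferentiableOn ℂ E6 {z | 0 < z.im} :=
  differentiableOn_of_mdifferentiable_coe ModularForm.E₆.holo' E6_coe

theorem vanishesAtCusp_E2_mul_E4_sub_E6 : VanishesAtCusp fun z => E2 z * E4 z - E6 z where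
  differentiableOn := (differentiableOn_E2.mul differentiableOn_E4).sub differentiableOn_E6
  periodic z := by
    simp only [E2_eq_sigmaSeries, E4_eq_sigmaSeries, E6_eq_sigmaSeries, periodic_sigmaSeries _ z]
  tendsto := by
    have h (k : ℕ) (c : ℂ) : Tendsto (fun z => c * sigmaSeries k z) (comap im atTop) (𝓝 0) := by
      simpa using (tendsto_sigmaSeries_cusp k).const_mul c
    simpa [E2_eq_sigmaSeries, E4_eq_sigmaSeries, E6_eq_sigmaSeries] using
      (((h 1 24).const_sub 1).mul ((h 3 240).const_add 1)).sub ((h 5 504).const_sub 1)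

theorem E4_pow_sub_E6_pow_coe (z : ℍ) :
    E4 z ^ 3 - E6 z ^ 2 = 1728 * ModularForm.discriminant z := by
  rw [ModularForm.discriminant_eq_E₄_cube_sub_E₆_sq, E4_coe, E6_coe]
  ring

theorem E4_pow_sub_E6_pow_ne_zero {z : ℂ} (hz : 0 < z.im) : E4 z ^ 3 - E6 z ^ 2 ≠ 0 := by
  rw [E4_pow_sub_E6_pow_coe ⟨z, hz⟩]
  exact mul_ne_zero (by norm_num) (ModularForm.discriminant_ne_zero _)

theorem exp_isBigO_E4_pow_sub_E6_pow :
    (fun z : ℂ => Real.exp (-2 * π * z.im)) =O[comap im atTop] fun z => E4 z ^ 3 - E6 z ^ 2 := by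
  have hΔ := ModularForm.exp_isBigO_discriminant.comp_tendsto
    UpperHalfPlane.tendsto_comap_im_ofComplex
  refine (hΔ.const_mul_right (c := (1728 : ℂ)) (by norm_num)).congr' ?_ ?_ <;>
  filter_upwards [tendsto_comap.eventually_gt_atTop 0] with z hz
  · simp [UpperHalfPlane.ofComplex_apply_of_im_pos hz]
  · simp [UpperHalfPlane.ofComplex_apply_of_im_pos hz, ← E4_pow_sub_E6_pow_coe]

theorem phi0_eq_div {z : ℂ} (hz : 0 < z.im) :
    phi0 z = 1728 * (E2 z * E4 z - E6 z) ^ 2 / (E4 z ^ 3 - E6 z ^ 2) := by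
  have hne := E4_pow_sub_E6_pow_ne_zero hz
  rw [phi0, varphim4, varphim2, jInv]
  field_simp
  ring

theorem vanishesAtCusp_phi0 : VanishesAtCusp phi0 where
  differentiableOn := by
    refine DifferentiableOn.congr (.div ?_ ?_ fun z hz => E4_pow_sub_E6_pow_ne_zero hz)
      fun z hz => phi0_eq_div hz
    · exact (vanishesAtCusp_E2_mul_E4_sub_E6.differentiableOn.pow 2).const_mul 1728
    · exact (differentiableOn_E4.pow 3).sub (differentiableOn_E6.pow 2)
  periodic z := by
    simp only [phi0, varphim4, varphim2, jInv, E2_eq_sigmaSeries, E4_eq_sigmaSeries,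
      E6_eq_sigmaSeries, periodic_sigmaSeries _ z]
  tendsto := by
    have hbounded : IsBoundedUnder (· ≤ ·) (comap im atTop)
        fun z => ‖(E2 z * E4 z - E6 z) / (E4 z ^ 3 - E6 z ^ 2)‖ :=
      Asymptotics.div_isBoundedUnder_of_isBigO
        (vanishesAtCusp_E2_mul_E4_sub_E6.isBigO_exp.trans exp_isBigO_E4_pow_sub_E6_pow)
    have hlim := vanishesAtCusp_E2_mul_E4_sub_E6.tendsto.const_mul 1728
    rw [mul_zero] at hlim
    refine (hlim.zero_mul_isBoundedUnder_le hbounded).congr' ?_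
    filter_upwards [tendsto_comap.eventually_gt_atTop 0] with z hz
    rw [phi0_eq_div hz]
    ring

end Cusp

section CuspContour

theorem integral_Ioo_zero_inv_eq_integral_Ioi {E : Type*} [NormedAddCommGroup E] [NormedSpace ℝ E]
    {a : ℝ} (ha : 0 < a) (F : ℝ → E) :
    ∫ t in Set.Ioo 0 a⁻¹, F t = ∫ s in Set.Ioi a, (s ^ 2)⁻¹ • F s⁻¹ := by
  rw [← Set.inv_Ioi₀ ha, ← Set.image_inv_eq_inv, integral_image_eq_integral_abs_deriv_smul
    measurableSet_Ioi (fun s hs => (hasDerivAt_inv (ha.trans hs).ne').hasDerivWithinAt)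
    inv_injective.injOn]
  simp only [abs_neg, abs_inv, abs_sq]

theorem hasGaussianMoments_restrict_Ioi {h z : ℝ → ℂ} {a δ C K : ℝ} (ha : 0 < a) (hδ : 0 < δ)
    (hh : ContinuousOn h (Set.Ioi a)) (hz : ContinuousOn z (Set.Ioi a))
    (hdecay : ∀ s ∈ Set.Ioi a, ‖h s‖ ≤ C * Real.exp (-δ * s))
    (hgrowth : ∀ s ∈ Set.Ioi a, ‖z s‖ ≤ K * s) (him : ∀ s ∈ Set.Ioi a, s⁻¹ ≤ (z s).im) :
    HasGaussianMoments (volume.restrict (Set.Ioi a)) h z := by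
  have hpos : ∀ s ∈ Set.Ioi a, 0 < (z s).im := fun s hs =>
    (inv_pos.mpr (ha.trans hs)).trans_le (him s hs)
  refine ⟨hh.aestronglyMeasurable measurableSet_Ioi, hz.aestronglyMeasurable measurableSet_Ioi,
    ae_restrict_of_forall_mem measurableSet_Ioi hpos, fun n k => ?_⟩
  have hdom : IntegrableOn (fun s : ℝ => C * K ^ n * (s ^ ((n + k : ℕ) : ℝ) *
      Real.exp (-δ * s ^ (1 : ℝ)))) (Set.Ioi a) :=
    ((integrableOn_rpow_mul_exp_neg_mul_rpow
      (by linarith [(n + k).cast_nonneg (α := ℝ)]) one_pos hδ).mono_set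
      (Set.Ioi_subset_Ioi ha.le)).const_mul _
  refine hdom.mono' ?_ (ae_restrict_of_forall_mem measurableSet_Ioi fun s hs => ?_)
  · have him_inv := (continuous_im.comp_continuousOn hz).inv₀ fun s hs => (hpos s hs).ne'
    exact ((hh.norm.mul (hz.norm.pow n)).mul (him_inv.pow k)).aestronglyMeasurable measurableSet_Ioi
  · have hs0 : 0 < s := ha.trans hs
    have hinv : (z s).im⁻¹ ≤ s := inv_le_of_inv_le₀ hs0 (him s hs)
    have him0 := hpos s hs
    rw [Real.norm_of_nonneg (by positivity), Real.rpow_natCast, Real.rpow_one]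
    calc ‖h s‖ * ‖z s‖ ^ n * (z s).im⁻¹ ^ k
        ≤ (C * Real.exp (-δ * s)) * (K * s) ^ n * s ^ k := by
          have hh' := hdecay s hs
          have hz' := hgrowth s hs
          have hbound : 0 ≤ C * Real.exp (-δ * s) := (norm_nonneg _).trans hh'
          gcongr
          exact mul_nonneg hbound (pow_nonneg ((norm_nonneg _).trans hz') n)
      _ = C * K ^ n * (s ^ (n + k) * Real.exp (-δ * s)) := by ring

/-- The integral of `φ(-1/(z - c)) (z - c)² e^{πir²z}` along the segment from the real cusp `c`
to `i`. -/
noncomputable def segmentIntegral (φ : ℂ → ℂ) (c r : ℝ) : ℂ :=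
  segInt c I fun z => φ (-1 / (z - c)) * (z - c) ^ 2 * cexp (π * I * (r : ℂ) ^ 2 * z)

/-- The integral of `φ(z) e^{πir²z}` along the vertical ray from `i` to `i∞`. -/
noncomputable def rayIntegral (φ : ℂ → ℂ) (r : ℝ) : ℂ :=
  rayIntFrom 1 fun z => φ z * cexp (π * I * (r : ℂ) ^ 2 * z)

/-- The radial profile of Viazovska's contour-integral eigenfunction, with an arbitrary function
`φ` in place of `φ₀`. -/
noncomputable def contourRad (φ : ℂ → ℂ) (r : ℝ) : ℂ :=
  segmentIntegral φ (-1) r + segmentIntegral φ 1 r - 2 * segmentIntegral φ 0 r +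
    2 * rayIntegral φ r

/-- The direction of the ray from `0` onto which `z ↦ -1/(z - c)` maps the segment from `c`
to `i`; the endpoint `i` corresponds to the direction vector itself. -/
noncomputable def segmentDir (c : ℝ) : ℂ := -1 / (I - c)

theorem I_sub_ofReal_ne_zero (c : ℝ) : I - c ≠ 0 := fun h => by
  simpa using congrArg im h

theorem segmentDir_ne_zero (c : ℝ) : segmentDir c ≠ 0 :=
  div_ne_zero (neg_ne_zero.mpr one_ne_zero) (I_sub_ofReal_ne_zero c)

theorem inv_segmentDir (c : ℝ) : (segmentDir c)⁻¹ = c - I := by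
  rw [segmentDir, inv_div, div_neg, div_one, neg_sub]

theorem segmentDir_im_pos (c : ℝ) : 0 < (segmentDir c).im := by
  rw [← inv_inv (segmentDir c), inv_segmentDir, inv_im]
  refine div_pos (by simp) (normSq_pos.mpr ?_)
  rw [← inv_segmentDir]
  exact inv_ne_zero (segmentDir_ne_zero c)

/-- The density `-φ(u) u⁻⁴` into which `u = -1/(z - c)` turns `φ(-1/(z - c)) (z - c)² dz`. The
sign reverses the orientation: as `z` runs from `c` to `i`, `u` comes in from infinity. -/
noncomputable def cuspWeight (φ : ℂ → ℂ) (u : ℂ) : ℂ := -(φ u / u ^ 4)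

variable {V : Type*} [NormedAddCommGroup V]

theorem segmentIntegral_eq_gaussianSuperposition (φ : ℂ → ℂ) (c : ℝ) (x : V) :
    segmentIntegral φ c ‖x‖ = gaussianSuperposition (volume.restrict (Set.Ioi 1))
      (fun s : ℝ => cuspWeight φ (s * segmentDir c) * segmentDir c)
      (fun s => c - 1 / (s * segmentDir c)) x := by
  rw [segmentIntegral, segInt, intervalIntegral.integral_of_le zero_le_one,
    integral_Ioc_eq_integral_Ioo]
  nth_rw 1 [← inv_one (G := ℝ)]
  rw [integral_Ioo_zero_inv_eq_integral_Ioi one_pos, ← integral_const_mul, gaussianSuperposition]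
  refine setIntegral_congr_fun measurableSet_Ioi fun s hs => ?_
  have hs0 : (s : ℂ) ≠ 0 := ofReal_ne_zero.mpr (one_pos.trans hs).ne'
  have hc := I_sub_ofReal_ne_zero c
  have harg : -1 / ((s⁻¹ : ℂ) * (I - c)) = s * segmentDir c := by
    rw [segmentDir]; field_simp
  have hparam : c + (s⁻¹ : ℂ) * (I - c) = c - 1 / (s * segmentDir c) := by
    rw [segmentDir]; field_simp; ring
  simp only [ofReal_inv, add_sub_cancel_left, real_smul, ofReal_pow, harg, cuspWeight]
  rw [hparam]
  generalize cexp _ = e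
  generalize φ (s * segmentDir c) = v
  rw [segmentDir]
  field_simp

theorem rayIntegral_eq_gaussianSuperposition (φ : ℂ → ℂ) (x : V) :
    rayIntegral φ ‖x‖ = gaussianSuperposition (volume.restrict (Set.Ioi 1))
      (fun s : ℝ => φ (s * I) * I) (fun s => s * I) x := by
  rw [rayIntegral, rayIntFrom, gaussianSuperposition, ← integral_const_mul]
  congr with s
  rw [mul_comm I s]
  ring

theorem sub_one_div_mul_segmentDir (c s : ℝ) :
    c - 1 / (s * segmentDir c) = c + (s⁻¹ : ℝ) * (I - c) := by
  rw [one_div, mul_inv, inv_segmentDir, ofReal_inv]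
  ring

theorem norm_sub_one_div_mul_segmentDir_le (c : ℝ) {s : ℝ} (hs : 1 ≤ s) :
    ‖c - 1 / (s * segmentDir c)‖ ≤ (‖(c : ℂ)‖ + ‖I - c‖) * s := by
  have hs0 : 0 ≤ s⁻¹ := inv_nonneg.mpr (zero_le_one.trans hs)
  calc ‖c - 1 / (s * segmentDir c)‖ ≤ ‖(c : ℂ)‖ + s⁻¹ * ‖I - c‖ := by
        rw [sub_one_div_mul_segmentDir]
        refine (norm_add_le _ _).trans_eq ?_
        rw [norm_mul, norm_real s⁻¹, Real.norm_of_nonneg hs0]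
    _ ≤ ‖(c : ℂ)‖ + 1 * ‖I - c‖ := by gcongr; exact inv_le_one_of_one_le₀ hs
    _ ≤ (‖(c : ℂ)‖ + ‖I - c‖) * s := by
        rw [one_mul]
        exact le_mul_of_one_le_right (by positivity) hs

namespace VanishesAtCusp

variable {φ : ℂ → ℂ}

theorem exists_norm_cuspWeight_mul_le (hφ : VanishesAtCusp φ) {d : ℂ} (hd : 0 < d.im) :
    ∃ C, ∀ s : ℝ, 1 < s → ‖cuspWeight φ (s * d) * d‖ ≤ C * Real.exp (-(2 * π * d.im) * s) := by
  obtain ⟨C, hC⟩ := hφ.exists_norm_le_mul_exp hd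
  refine ⟨C / ‖d‖ ^ 4 * ‖d‖, fun s hs => ?_⟩
  have hφs : ‖φ (s * d)‖ ≤ C * Real.exp (-(2 * π * d.im) * s) := by
    refine (hC _ ?_).trans_eq ?_ <;> rw [im_ofReal_mul]
    · exact le_mul_of_one_le_left hd.le hs.le
    · ring_nf
  have hsd : ‖d‖ ≤ ‖s * d‖ := by
    rw [norm_mul, norm_real, Real.norm_of_nonneg (one_pos.trans hs).le]
    exact le_mul_of_one_le_left (norm_nonneg d) hs.le
  have hd0 : 0 < ‖d‖ := norm_pos_iff.mpr fun h => by simp [h] at hd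
  calc ‖cuspWeight φ (s * d) * d‖ = ‖φ (s * d)‖ / ‖s * d‖ ^ 4 * ‖d‖ := by
        rw [cuspWeight, norm_mul, norm_neg, norm_div, norm_pow]
    _ ≤ C * Real.exp (-(2 * π * d.im) * s) / ‖d‖ ^ 4 * ‖d‖ := by
        gcongr
        exact (norm_nonneg _).trans hφs
    _ = C / ‖d‖ ^ 4 * ‖d‖ * Real.exp (-(2 * π * d.im) * s) := by ring

theorem differentiableOn_cuspWeight (hφ : VanishesAtCusp φ) :
    DifferentiableOn ℂ (cuspWeight φ) {u | 0 < u.im} :=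
  (hφ.differentiableOn.div (differentiableOn_pow 4) fun u (hu : 0 < u.im) =>
    pow_ne_zero 4 fun h => by simp [h] at hu).neg

theorem hasGaussianMoments_segment (hφ : VanishesAtCusp φ) (c : ℝ) :
    HasGaussianMoments (volume.restrict (Set.Ioi 1))
      (fun s : ℝ => cuspWeight φ (s * segmentDir c) * segmentDir c)
      (fun s => c - 1 / (s * segmentDir c)) := by
  have hd : 0 < (segmentDir c).im := segmentDir_im_pos c
  have hray : ContinuousOn (fun s : ℝ => s * segmentDir c) (Set.Ioi 1) := by fun_prop
  have him : ∀ s ∈ Set.Ioi (1 : ℝ), 0 < (s * segmentDir c).im := fun s hs => by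
    rw [im_ofReal_mul]
    exact mul_pos (one_pos.trans hs) hd
  obtain ⟨C, hC⟩ := hφ.exists_norm_cuspWeight_mul_le hd
  refine hasGaussianMoments_restrict_Ioi one_pos (mul_pos Real.two_pi_pos hd)
    ((hφ.differentiableOn_cuspWeight.continuousOn.comp hray him).mul continuousOn_const)
    ?_ hC (fun s hs => norm_sub_one_div_mul_segmentDir_le c hs.le) fun s _ => ?_
  · simp only [sub_one_div_mul_segmentDir]
    have hinv : ContinuousOn (fun s : ℝ => s⁻¹) (Set.Ioi 1) :=
      continuousOn_inv₀.mono fun s hs => (one_pos.trans hs).ne'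
    fun_prop
  · rw [sub_one_div_mul_segmentDir, add_im, im_ofReal_mul]
    simp

theorem hasGaussianMoments_ray (hφ : VanishesAtCusp φ) :
    HasGaussianMoments (volume.restrict (Set.Ioi 1))
      (fun s : ℝ => φ (s * I) * I) (fun s => s * I) := by
  obtain ⟨C, hC⟩ := hφ.exists_norm_le_mul_exp one_pos
  have hray : ContinuousOn (fun s : ℝ => (s : ℂ) * I) (Set.Ioi 1) := by fun_prop
  have him (s : ℝ) : ((s : ℂ) * I).im = s := by simp
  refine hasGaussianMoments_restrict_Ioi (δ := 2 * π) (C := C) (K := 1) one_pos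
    Real.two_pi_pos ?_ hray (fun s hs => ?_) (fun s hs => ?_) fun s hs => ?_
  · refine (hφ.differentiableOn.continuousOn.comp hray fun s hs => ?_).mul continuousOn_const
    exact (one_pos.trans hs).trans_eq (him s).symm
  · have hφs := hC (s * I) ((him s).symm ▸ hs.le)
    rwa [him, neg_mul, ← mul_one ‖φ _‖, ← norm_I, ← norm_mul] at hφs
  · rw [norm_mul, norm_I, norm_real, Real.norm_of_nonneg (one_pos.trans hs).le, mul_one, one_mul]
  · rw [him]
    exact (inv_le_one_of_one_le₀ hs.le).trans hs.le

variable [InnerProductSpace ℝ V]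

/-- The Schwartz function `x ↦ contourRad φ ‖x‖`. -/
noncomputable def contourSchwartz (V : Type*) [NormedAddCommGroup V] [InnerProductSpace ℝ V]
    (hφ : VanishesAtCusp φ) : 𝓢(V, ℂ) :=
  (hφ.hasGaussianMoments_segment (-1)).toSchwartz V +
    (hφ.hasGaussianMoments_segment 1).toSchwartz V -
    (2 : ℂ) • (hφ.hasGaussianMoments_segment 0).toSchwartz V +
    (2 : ℂ) • hφ.hasGaussianMoments_ray.toSchwartz V

theorem coe_contourSchwartz (hφ : VanishesAtCusp φ) :
    ⇑(hφ.contourSchwartz V) = fun x => contourRad φ ‖x‖ := by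
  ext x
  simp only [contourRad, segmentIntegral_eq_gaussianSuperposition,
    rayIntegral_eq_gaussianSuperposition]
  rfl

end VanishesAtCusp

section Fourier

variable [InnerProductSpace ℝ V] [FiniteDimensional ℝ V] [MeasurableSpace V] [BorelSpace V]

theorem fourier_eq_of_fourier_eq_of_even {f g : 𝓢(V, ℂ)} (hf : ∀ x, f (-x) = f x)
    (hfg : 𝓕 f = g) : 𝓕 g = f := by
  have hinv : 𝓕⁻ g = f := by rw [← hfg, fourierInv_fourier_eq]
  ext x
  rw [← hf x, ← hinv, SchwartzMap.fourierInv_coe, SchwartzMap.fourier_coe,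
    Real.fourierInv_eq_fourier_neg, neg_neg]

theorem HasGaussianMoments.fourier_toSchwartz_apply {α : Type*} [MeasurableSpace α]
    {μ : Measure α} [SFinite μ] {h z : α → ℂ} (H : HasGaussianMoments μ h z)
    (hV : Module.finrank ℝ V = 8) (y : V) :
    𝓕 (H.toSchwartz V) y =
      gaussianSuperposition μ (fun t => h t / z t ^ 4) (fun t => -1 / z t) y := by
  rw [SchwartzMap.fourier_coe, H.coe_toSchwartz, H.fourier_gaussianSuperposition, hV]
  have hpow (w : ℂ) : (I / w) ^ (((8 : ℕ) : ℂ) / 2) = 1 / w ^ 4 := by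
    rw [show ((8 : ℕ) : ℂ) / 2 = (4 : ℕ) by norm_num, cpow_natCast, div_pow, I_pow_four]
  simp only [hpow, mul_one_div]

theorem segmentDir_one : segmentDir 1 = (1 + I) / 2 := by
  rw [segmentDir, div_eq_div_iff (I_sub_ofReal_ne_zero 1) two_ne_zero, ofReal_one]
  linear_combination -I_sq

theorem segmentDir_neg_one : segmentDir (-1) = (-1 + I) / 2 := by
  rw [segmentDir, div_eq_div_iff (I_sub_ofReal_ne_zero (-1)) two_ne_zero, ofReal_neg, ofReal_one]
  linear_combination -I_sq

variable {φ : ℂ → ℂ}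

namespace VanishesAtCusp

theorem fourier_segment_zero (hφ : VanishesAtCusp φ) (hV : Module.finrank ℝ V = 8) :
    𝓕 ((hφ.hasGaussianMoments_segment 0).toSchwartz V) =
      -hφ.hasGaussianMoments_ray.toSchwartz V := by
  have hdir : segmentDir 0 = I := by simp [segmentDir, neg_div]
  ext y
  rw [HasGaussianMoments.fourier_toSchwartz_apply _ hV, neg_apply,
    HasGaussianMoments.coe_toSchwartz, gaussianSuperposition, gaussianSuperposition, ← integral_neg]
  refine setIntegral_congr_fun measurableSet_Ioi fun s hs => ?_
  have hs0 : (s : ℂ) ≠ 0 := ofReal_ne_zero.mpr (one_pos.trans hs).ne'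
  have hparam : -1 / ((0 : ℝ) - 1 / (s * I)) = s * I := by
    rw [ofReal_zero, zero_sub, neg_div_neg_eq, one_div_one_div]
  simp only [hdir, hparam, cuspWeight]
  rw [ofReal_zero, zero_sub]
  field_simp

theorem exists_norm_cuspWeight_mul_cexp_le (hφ : VanishesAtCusp φ) (r : ℝ) :
    ∃ M, ∀ u : ℂ, 1 / 2 ≤ u.im → ‖cuspWeight φ u * cexp (π * I * (r : ℂ) ^ 2 * (1 - 1 / u))‖ ≤
      M * Real.exp (-(2 * π) * u.im) := by
  obtain ⟨C, hC⟩ := hφ.exists_norm_le_mul_exp one_half_pos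
  refine ⟨C * 16, fun u hu => ?_⟩
  have hu0 : 0 < u.im := one_half_pos.trans_le hu
  have hnorm : 1 / 2 ≤ ‖u‖ := hu.trans (im_le_norm u)
  have hparam : 0 < (1 - 1 / u).im := by
    rw [sub_im, one_im, one_div, inv_im, neg_div, sub_neg_eq_add, zero_add]
    exact div_pos hu0 (normSq_pos.mpr fun h => by simp [h] at hu0)
  have hinv : (‖u‖ ^ 4)⁻¹ ≤ 16 := by
    calc (‖u‖ ^ 4)⁻¹ ≤ ((1 / 2 : ℝ) ^ 4)⁻¹ := by gcongr
      _ = 16 := by norm_num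
  calc _ ≤ ‖cuspWeight φ u‖ * 1 := by
        rw [norm_mul]
        gcongr
        exact norm_cexp_pi_mul_I_mul_sq_mul_le_one hparam r
    _ = ‖φ u‖ * (‖u‖ ^ 4)⁻¹ := by
        rw [cuspWeight, mul_one, norm_neg, norm_div, norm_pow, div_eq_mul_inv]
    _ ≤ (C * Real.exp (-2 * π * u.im)) * 16 := by
        have hφu := hC u hu
        gcongr
        exact (norm_nonneg _).trans hφu
    _ = C * 16 * Real.exp (-(2 * π) * u.im) := by ring_nf

theorem integral_ray_segmentDir_neg_one_eq (hφ : VanishesAtCusp φ) (r : ℝ) :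
    ∫ s in Set.Ioi (1 : ℝ), cuspWeight φ (1 + s * segmentDir (-1)) *
        cexp (π * I * (r : ℂ) ^ 2 * (1 - 1 / (1 + s * segmentDir (-1)))) * segmentDir (-1) =
      ∫ s in Set.Ioi (1 : ℝ), cuspWeight φ (s * segmentDir 1) *
        cexp (π * I * (r : ℂ) ^ 2 * (1 - 1 / (s * segmentDir 1))) * segmentDir 1 := by
  obtain ⟨M, hM⟩ := hφ.exists_norm_cuspWeight_mul_cexp_le r
  have hmeet : 1 + segmentDir (-1) = segmentDir 1 := by
    rw [segmentDir_one, segmentDir_neg_one]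
    ring
  have hdiff : DifferentiableOn ℂ (fun u => cuspWeight φ u *
      cexp (π * I * (r : ℂ) ^ 2 * (1 - 1 / u))) {u | 0 < u.im} := by
    refine hφ.differentiableOn_cuspWeight.mul (DifferentiableOn.cexp (.const_mul
      ((differentiableOn_const 1).sub (.div (differentiableOn_const 1) differentiableOn_id ?_)) _))
    rintro u (hu : 0 < u.im) rfl
    simp at hu
  have hrot := integral_Ioi_ray_eq_integral_Ioi_ray Real.two_pi_pos one_half_pos hdiff hM
    (q₁ := 1) (q₂ := 0) (A := 1) (segmentDir_im_pos (-1)) (segmentDir_im_pos 1)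
    (by simpa using hmeet) (by simp [segmentDir_neg_one])
  simpa only [zero_add] using hrot

theorem fourier_segment_neg_one (hφ : VanishesAtCusp φ) (hV : Module.finrank ℝ V = 8) :
    𝓕 ((hφ.hasGaussianMoments_segment (-1)).toSchwartz V) =
      (hφ.hasGaussianMoments_segment 1).toSchwartz V := by
  ext y
  rw [HasGaussianMoments.fourier_toSchwartz_apply _ hV, HasGaussianMoments.coe_toSchwartz,
    gaussianSuperposition, gaussianSuperposition]
  simp only [mul_right_comm _ (segmentDir 1), ofReal_one]
  rw [← hφ.integral_ray_segmentDir_neg_one_eq]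
  refine setIntegral_congr_fun measurableSet_Ioi fun s hs => ?_
  have him : 0 < ((s : ℂ) * segmentDir (-1)).im := by
    rw [im_ofReal_mul]
    exact mul_pos (one_pos.trans hs) (segmentDir_im_pos (-1))
  simp only [ofReal_neg, ofReal_one]
  generalize (s : ℂ) * segmentDir (-1) = u at him ⊢
  have hu : u ≠ 0 := fun h => by simp [h] at him
  have hu' : 1 + u ≠ 0 := fun h => by simp [eq_neg_of_add_eq_zero_right h] at him
  have hneg : -1 - 1 / u = -((1 + u) / u) := by field_simp; ring
  have hparam : -1 / (-1 - 1 / u) = 1 - 1 / (1 + u) := by rw [hneg]; field_simp; ring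
  have hperiodic : φ (1 + u) = φ u := by rw [add_comm, hφ.periodic]
  rw [hparam, hneg, cuspWeight, cuspWeight, hperiodic]
  field_simp

theorem fourier_segment_one (hφ : VanishesAtCusp φ) (hV : Module.finrank ℝ V = 8) :
    𝓕 ((hφ.hasGaussianMoments_segment 1).toSchwartz V) =
      (hφ.hasGaussianMoments_segment (-1)).toSchwartz V :=
  fourier_eq_of_fourier_eq_of_even (HasGaussianMoments.toSchwartz_neg _)
    (hφ.fourier_segment_neg_one hV)

theorem fourier_ray (hφ : VanishesAtCusp φ) (hV : Module.finrank ℝ V = 8) :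
    𝓕 (hφ.hasGaussianMoments_ray.toSchwartz V) =
      -(hφ.hasGaussianMoments_segment 0).toSchwartz V := by
  rw [← fourier_eq_of_fourier_eq_of_even (HasGaussianMoments.toSchwartz_neg _)
    (hφ.fourier_segment_zero hV), FourierTransform.fourier_neg, neg_neg]

theorem fourier_contourSchwartz (hφ : VanishesAtCusp φ) (hV : Module.finrank ℝ V = 8) :
    𝓕 (hφ.contourSchwartz V) = hφ.contourSchwartz V := by
  simp only [contourSchwartz, sub_eq_add_neg, FourierTransform.fourier_add,
    FourierTransform.fourier_neg, FourierTransform.fourier_smul, hφ.fourier_segment_neg_one hV,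
    hφ.fourier_segment_one hV, hφ.fourier_segment_zero hV, hφ.fourier_ray hV]
  module

end VanishesAtCusp

theorem aFn_schwartz_and_fourier_eigenfunction_general (hφ : VanishesAtCusp φ)
    (hV : Module.finrank ℝ V = 8) :
    (∃ S : 𝓢(V, ℂ), ∀ x, S x = contourRad φ ‖x‖) ∧
      ∀ x : V, 𝓕 (fun x : V => contourRad φ ‖x‖) x = contourRad φ ‖x‖ := by
  refine ⟨⟨hφ.contourSchwartz V, congrFun hφ.coe_contourSchwartz⟩, fun x => ?_⟩
  rw [← hφ.coe_contourSchwartz, ← SchwartzMap.fourier_coe, hφ.fourier_contourSchwartz hV,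
    hφ.coe_contourSchwartz]

end Fourier

end CuspContour

theorem aFn_eq_contourRad_phi0 : aFn = fun x => contourRad phi0 ‖x‖ := by
  ext x
  simp only [aFn, aRad, contourRad, segmentIntegral, rayIntegral, ofReal_neg, ofReal_one,
    ofReal_zero, sub_neg_eq_add, sub_zero]

/-- **Proposition 1.** The function `a : ℝ⁸ → ℂ` defined by the contour integrals above is a
Schwartz function and is a `+1`-eigenfunction of the Fourier transform: `â = a`. -/
theorem aFn_schwartz_and_fourier_eigenfunction :
    (∃ S : SchwartzMap (EuclideanSpace ℝ (Fin 8)) ℂ, ∀ x, S x = aFn x) ∧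
    (∀ x : EuclideanSpace ℝ (Fin 8), 𝓕 aFn x = aFn x) := by
  rw [aFn_eq_contourRad_phi0]
  exact aFn_schwartz_and_fourier_eigenfunction_general vanishesAtCusp_phi0
    finrank_euclideanSpace_fin
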